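/- Let R = Q/𝔟₃ where 𝔟₃ = (x³, x²y, yz², z³, xyz, xy² − y³) ⊆ Q. Then the socle (0 :_R 𝔪) of R is equal to the R-submodule generated by the images of x²z², xy², and y²z, and its dimension as a k-vector space is 3 (that is, R has type 3). -/

import Mathlib

/-!
The quotient `R` has dimension 15, with monomial basis `x ^ i * z ^ l` (`i, l ≤ 2`), `y`, `xy`, `yz`,
`y²`, `xy²`, `y²z`. Besides its generators, `b3` contains `xy³ = y * x²y - x * (xy² - y³)`, `y⁴` and
`y³z`, so dividing a power series by these monomials leaves a polynomial whose only monomial outside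
the basis is `y³ ≡ xy²`. Hence a power series lies in `b3` iff fifteen explicit linear forms in its
coefficients vanish (`mem_Ib3_iff`); that they vanish on `b3` is a computation with each generator.

Applying this criterion to `f * x`, `f * y` and `f * z` shows that all coordinates of a socle element
vanish except those at `x²z²`, `xy²`, `y²z` (`socle_normal_form`). The same criterion shows that these
three monomials are in the socle and are linearly independent over `k`.
-/

/-!
STATEMENT 6: For `R = Q/b3`, the socle `(0 :_R m)` of `R` (where `m` is the
maximal ideal of `R`, the image of `(x,y,z)`) equals the `R`-submodule generated by
the images of x^2*z^2, x*y^2, y^2*z, and its dimension as a `k`-vector space is 3 (so `R` has type 3).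

Here `Q = k[[x,y,z]]` is formalized as `MvPowerSeries (Fin 3) k` with
`x = X 0`, `y = X 1`, `z = X 2`.
-/

noncomputable section

/-- The variable `x` in `Q = k[[x,y,z]]`. -/
def xx (k : Type*) [Field k] : MvPowerSeries (Fin 3) k := MvPowerSeries.X 0
/-- The variable `y` in `Q = k[[x,y,z]]`. -/
def yy (k : Type*) [Field k] : MvPowerSeries (Fin 3) k := MvPowerSeries.X 1
/-- The variable `z` in `Q = k[[x,y,z]]`. -/
def zz (k : Type*) [Field k] : MvPowerSeries (Fin 3) k := MvPowerSeries.X 2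

/-- The ideal `b3` of the paper. -/
def Ib3 (k : Type*) [Field k] : Ideal (MvPowerSeries (Fin 3) k) :=
  Ideal.span {xx k ^ 3, xx k ^ 2 * yy k, yy k * zz k ^ 2, zz k ^ 3, xx k * yy k * zz k, xx k * yy k ^ 2 - yy k ^ 3}

/-! ### Coefficients and monomials -/

/-- The exponent vector of `x ^ a * y ^ b * z ^ c`. -/
def expo (a b c : ℕ) : Fin 3 →₀ ℕ := Finsupp.equivFunOnFinite.symm ![a, b, c]

/-- The coefficient of `x ^ a * y ^ b * z ^ c` in `f`. -/
def cf {k : Type*} [Field k] (f : MvPowerSeries (Fin 3) k) (a b c : ℕ) : k :=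
  MvPowerSeries.coeff (expo a b c) f

/-- The monomial `x ^ a * y ^ b * z ^ c`. -/
def mon (k : Type*) [Field k] (a b c : ℕ) : MvPowerSeries (Fin 3) k :=
  xx k ^ a * yy k ^ b * zz k ^ c

section

variable {k : Type*} [Field k]

lemma mon_eq (a b c : ℕ) : mon k a b c = MvPowerSeries.monomial (expo a b c) 1 := by
  simp only [mon, xx, yy, zz, MvPowerSeries.X_pow_eq, MvPowerSeries.monomial_mul_monomial, mul_one]
  have h : (Finsupp.single 0 a + Finsupp.single 1 b + Finsupp.single 2 c : Fin 3 →₀ ℕ) =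
      expo a b c := by
    refine Finsupp.ext fun t => ?_
    fin_cases t <;> simp [expo]
  rw [h]

lemma expo_le_expo (a b c i j l : ℕ) :
    expo a b c ≤ expo i j l ↔ a ≤ i ∧ b ≤ j ∧ c ≤ l := by
  simp [Finsupp.le_def, Fin.forall_fin_succ, expo]

lemma expo_sub (a b c i j l : ℕ) :
    expo i j l - expo a b c = expo (i - a) (j - b) (l - c) := by
  ext t
  fin_cases t <;> simp [expo]

lemma cf_mul_mon (f : MvPowerSeries (Fin 3) k) (a b c i j l : ℕ) :
    cf (f * mon k a b c) i j l =
      if a ≤ i ∧ b ≤ j ∧ c ≤ l then cf f (i - a) (j - b) (l - c) else 0 := by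
  simp [cf, mon_eq, MvPowerSeries.coeff_mul_monomial, expo_le_expo, expo_sub]

lemma cf_mon (a b c i j l : ℕ) :
    cf (mon k a b c) i j l = if i = a ∧ j = b ∧ l = c then 1 else 0 := by
  have h : expo i j l = expo a b c ↔ i = a ∧ j = b ∧ l = c := by
    simp [expo]
  simp [cf, mon_eq, MvPowerSeries.coeff_monomial, h]

lemma cf_add (f g : MvPowerSeries (Fin 3) k) (i j l : ℕ) :
    cf (f + g) i j l = cf f i j l + cf g i j l := by simp [cf]

lemma cf_sub (f g : MvPowerSeries (Fin 3) k) (i j l : ℕ) :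
    cf (f - g) i j l = cf f i j l - cf g i j l := by simp [cf]

lemma cf_smul (r : k) (f : MvPowerSeries (Fin 3) k) (i j l : ℕ) :
    cf (r • f) i j l = r * cf f i j l := by simp [cf]

lemma cf_zero (i j l : ℕ) : cf (0 : MvPowerSeries (Fin 3) k) i j l = 0 := by simp [cf]

lemma cf_ext {f g : MvPowerSeries (Fin 3) k} (h : ∀ i j l, cf f i j l = cf g i j l) : f = g := by
  ext m
  have hm : m = expo (m 0) (m 1) (m 2) := by
    ext t
    fin_cases t <;> simp [expo]
  rw [hm]
  exact h _ _ _

/-- Division by a monomial: some multiple of `x ^ a * y ^ b * z ^ c` cancels exactly those terms of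
`f` whose monomials it divides. -/
lemma exists_div (f : MvPowerSeries (Fin 3) k) (a b c : ℕ) :
    ∃ q : MvPowerSeries (Fin 3) k, ∀ i j l, cf (f - q * mon k a b c) i j l =
      if a ≤ i ∧ b ≤ j ∧ c ≤ l then 0 else cf f i j l := by
  obtain ⟨q, hq⟩ : ∃ q : MvPowerSeries (Fin 3) k,
      ∀ m, MvPowerSeries.coeff m q = MvPowerSeries.coeff (m + expo a b c) f :=
    ⟨fun m => MvPowerSeries.coeff (m + expo a b c) f, fun _ => rfl⟩
  refine ⟨q, fun i j l => ?_⟩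
  rw [cf_sub, cf_mul_mon]
  split_ifs with h
  · have : cf q (i - a) (j - b) (l - c) = cf f i j l := by
      rw [cf, hq, ← expo_sub, tsub_add_cancel_of_le ((expo_le_expo ..).2 h), cf]
    rw [this]
    exact sub_self _
  · simp

/-! ### Membership in the ideal -/

lemma Ib3_eq : Ib3 k = Ideal.span {mon k 3 0 0, mon k 2 1 0, mon k 0 1 2, mon k 0 0 3,
    mon k 1 1 1, mon k 1 2 0 - mon k 0 3 0} := by
  simp [Ib3, mon]

/-- The normal form of `f` modulo `Ib3 k` is zero. The 15 conditions are the vanishing of the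
coordinates in the monomial basis `x ^ i * z ^ l` (`i, l ≤ 2`), `y`, `xy`, `yz`, `y²`, `xy²`, `y²z`
of the quotient, where `y³` is rewritten as `xy²`. -/
def NFZero (f : MvPowerSeries (Fin 3) k) : Prop :=
  (∀ i ≤ 2, ∀ l ≤ 2, cf f i 0 l = 0) ∧ cf f 0 1 0 = 0 ∧ cf f 1 1 0 = 0 ∧ cf f 0 1 1 = 0 ∧
    cf f 0 2 0 = 0 ∧ cf f 1 2 0 + cf f 0 3 0 = 0 ∧ cf f 0 2 1 = 0

lemma NFZero.of_mem {f : MvPowerSeries (Fin 3) k} (hf : f ∈ Ib3 k) : NFZero f := by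
  rw [Ib3_eq] at hf
  simp only [Ideal.mem_span_insert, Ideal.mem_span_singleton'] at hf
  obtain ⟨q₁, -, ⟨q₂, -, ⟨q₃, -, ⟨q₄, -, ⟨q₅, -, ⟨q₆, rfl⟩, rfl⟩, rfl⟩, rfl⟩, rfl⟩, rfl⟩ := hf
  refine ⟨fun i hi l hl => ?_, ?_⟩
  · simp only [cf_add, mul_sub, cf_sub, cf_mul_mon]
    have h3 : ¬ 3 ≤ i := by omega
    have h4 : ¬ 3 ≤ l := by omega
    simp [h3, h4]
  · simp [cf_add, mul_sub, cf_sub, cf_mul_mon]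

lemma mon_mem_of_gen :
    mon k 3 0 0 ∈ Ib3 k ∧ mon k 2 1 0 ∈ Ib3 k ∧ mon k 0 1 2 ∈ Ib3 k ∧ mon k 0 0 3 ∈ Ib3 k ∧
      mon k 1 1 1 ∈ Ib3 k ∧ mon k 1 2 0 - mon k 0 3 0 ∈ Ib3 k := by
  rw [Ib3_eq]
  refine ⟨?_, ?_, ?_, ?_, ?_, ?_⟩ <;> exact Ideal.subset_span (by simp)

lemma mon_130_mem : mon k 1 3 0 ∈ Ib3 k := by
  obtain ⟨-, h2, -, -, -, h6⟩ := mon_mem_of_gen (k := k)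
  have : mon k 1 3 0 = yy k * mon k 2 1 0 - xx k * (mon k 1 2 0 - mon k 0 3 0) := by
    simp only [mon]; ring
  rw [this]
  exact sub_mem (Ideal.mul_mem_left _ _ h2) (Ideal.mul_mem_left _ _ h6)

lemma mon_040_mem : mon k 0 4 0 ∈ Ib3 k := by
  obtain ⟨-, -, -, -, -, h6⟩ := mon_mem_of_gen (k := k)
  have : mon k 0 4 0 = mon k 1 3 0 - yy k * (mon k 1 2 0 - mon k 0 3 0) := by
    simp only [mon]; ring
  rw [this]
  exact sub_mem mon_130_mem (Ideal.mul_mem_left _ _ h6)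

lemma mon_031_mem : mon k 0 3 1 ∈ Ib3 k := by
  obtain ⟨-, -, -, -, h5, h6⟩ := mon_mem_of_gen (k := k)
  have : mon k 0 3 1 = yy k * mon k 1 1 1 - zz k * (mon k 1 2 0 - mon k 0 3 0) := by
    simp only [mon]; ring
  rw [this]
  exact sub_mem (Ideal.mul_mem_left _ _ h5) (Ideal.mul_mem_left _ _ h6)

/-- Division by the eight monomials found in `Ib3 k` leaves a polynomial in the nine `x ^ i * z ^ l`
and `y`, `xy`, `yz`, `y²`, `xy²`, `y²z`, `y³`; when the normal form vanishes, this polynomial is a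
scalar multiple of `xy² - y³`. -/
lemma NFZero.mem {f : MvPowerSeries (Fin 3) k} (hf : NFZero f) : f ∈ Ib3 k := by
  obtain ⟨h1, h2, h3, h4, h5, h6⟩ := mon_mem_of_gen (k := k)
  obtain ⟨n1, n2, n3, n4, n5, n6, n7⟩ := hf
  obtain ⟨q₁, e₁⟩ := exists_div f 3 0 0
  obtain ⟨q₂, e₂⟩ := exists_div (f - q₁ * mon k 3 0 0) 2 1 0
  obtain ⟨q₃, e₃⟩ := exists_div (f - q₁ * mon k 3 0 0 - q₂ * mon k 2 1 0) 0 1 2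
  set f₃ := f - q₁ * mon k 3 0 0 - q₂ * mon k 2 1 0 - q₃ * mon k 0 1 2 with hf₃
  obtain ⟨q₄, e₄⟩ := exists_div f₃ 0 0 3
  obtain ⟨q₅, e₅⟩ := exists_div (f₃ - q₄ * mon k 0 0 3) 1 1 1
  set f₅ := f₃ - q₄ * mon k 0 0 3 - q₅ * mon k 1 1 1 with hf₅
  obtain ⟨q₆, e₆⟩ := exists_div f₅ 1 3 0
  obtain ⟨q₇, e₇⟩ := exists_div (f₅ - q₆ * mon k 1 3 0) 0 4 0
  obtain ⟨q₈, e₈⟩ := exists_div (f₅ - q₆ * mon k 1 3 0 - q₇ * mon k 0 4 0) 0 3 1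
  set f₈ := f₅ - q₆ * mon k 1 3 0 - q₇ * mon k 0 4 0 - q₈ * mon k 0 3 1 with hf₈
  have key : f₈ = cf f 1 2 0 • (mon k 1 2 0 - mon k 0 3 0) := by
    apply cf_ext
    intro i j l
    rw [e₈, e₇, e₆, e₅, e₄, e₃, e₂, e₁, cf_smul, cf_sub, cf_mon, cf_mon]
    -- Outside this box one of `x³`, `y⁴`, `z³` divides the monomial, so both sides vanish.
    by_cases hb : i ≤ 2 ∧ j ≤ 3 ∧ l ≤ 2
    · obtain ⟨hi, hj, hl⟩ := hb
      have n6' : cf f 0 3 0 = - cf f 1 2 0 := by linear_combination n6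
      interval_cases j
      · simp [n1 i hi l hl]
      all_goals interval_cases i <;> interval_cases l <;> simp [*]
    · have : 3 ≤ i ∨ 4 ≤ j ∨ 3 ≤ l := by omega
      split_ifs <;> first | omega | simp
  have hf : f = f₈ + q₁ * mon k 3 0 0 + q₂ * mon k 2 1 0 + q₃ * mon k 0 1 2 + q₄ * mon k 0 0 3
      + q₅ * mon k 1 1 1 + q₆ * mon k 1 3 0 + q₇ * mon k 0 4 0 + q₈ * mon k 0 3 1 := by
    rw [hf₈, hf₅, hf₃]; ring
  rw [hf, key, MvPowerSeries.smul_eq_C_mul]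
  refine add_mem (add_mem (add_mem (add_mem (add_mem (add_mem (add_mem (add_mem ?_ ?_) ?_) ?_) ?_)
    ?_) ?_) ?_) ?_ <;> apply Ideal.mul_mem_left
  exacts [h6, h1, h2, h3, h4, h5, mon_130_mem, mon_040_mem, mon_031_mem]

lemma mem_Ib3_iff {f : MvPowerSeries (Fin 3) k} : f ∈ Ib3 k ↔ NFZero f :=
  ⟨NFZero.of_mem, NFZero.mem⟩

/-! ### The socle -/

/-- The class of `f` lies in the socle iff `f` is multiplied into `Ib3 k` by each variable. -/
lemma mk_mem_socle_iff {f : MvPowerSeries (Fin 3) k} :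
    Ideal.Quotient.mk (Ib3 k) f ∈ (⊥ : Ideal (MvPowerSeries (Fin 3) k ⧸ Ib3 k)).colon
        (Ideal.map (Ideal.Quotient.mk (Ib3 k)) (Ideal.span {xx k, yy k, zz k})) ↔
      f * mon k 1 0 0 ∈ Ib3 k ∧ f * mon k 0 1 0 ∈ Ib3 k ∧ f * mon k 0 0 1 ∈ Ib3 k := by
  rw [Ideal.map_span, Ideal.colon_span, Submodule.mem_colon]
  simp [Set.image_insert_eq, ← map_mul, Ideal.Quotient.eq_zero_iff_mem, mon]

/-- Modulo `Ib3 k`, a socle element is a combination of `x²z²`, `xy²`, `y²z`; since `y³ ≡ xy²`, the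
coefficient at `xy²` also collects that of `y³`. -/
lemma socle_normal_form {f : MvPowerSeries (Fin 3) k} (hx : f * mon k 1 0 0 ∈ Ib3 k)
    (hy : f * mon k 0 1 0 ∈ Ib3 k) (hz : f * mon k 0 0 1 ∈ Ib3 k) :
    f - (cf f 2 0 2 • mon k 2 0 2 + (cf f 1 2 0 + cf f 0 3 0) • mon k 1 2 0 +
      cf f 0 2 1 • mon k 0 2 1) ∈ Ib3 k := by
  rw [mem_Ib3_iff] at *
  obtain ⟨x1, x2, x3, x4, x5, x6, x7⟩ := hx
  obtain ⟨y1, y2, y3, y4, y5, y6, y7⟩ := hy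
  obtain ⟨z1, z2, z3, z4, z5, z6, z7⟩ := hz
  have x1' : ∀ i ≤ 1, ∀ l ≤ 2, cf f i 0 l = 0 := fun i hi l hl => by
    simpa [cf_mul_mon] using x1 (i + 1) (by omega) l hl
  have z1' : ∀ i ≤ 2, ∀ l ≤ 1, cf f i 0 l = 0 := fun i hi l hl => by
    simpa [cf_mul_mon] using z1 i hi (l + 1) (by omega)
  -- The remaining conditions give the coordinates at `y`, `xy`, `yz`, `y²`.
  simp [cf_mul_mon] at x2 x3 x4 x5 x6 x7 y2 y3 y4 y5 y6 y7 z2 z3 z4 z5 z6 z7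
  refine ⟨fun i hi l hl => ?_, ?_⟩
  · simp only [cf_sub, cf_add, cf_smul, cf_mon]
    by_cases h : i = 2 ∧ l = 2
    · simp [h]
    · have : cf f i 0 l = 0 := by
        by_cases hi' : i ≤ 1
        · exact x1' i hi' l hl
        · exact z1' i hi l (by omega)
      simp [h, this]
  · simp_all [cf_sub, cf_add, cf_smul, cf_mon]

end

/-- The socle `(0 :_R m)` of `R = Q/b3`. -/
theorem socle_b3 (k : Type*) [Field k] :
    (⊥ : Ideal (MvPowerSeries (Fin 3) k ⧸ Ib3 k)).colon
        (Ideal.map (Ideal.Quotient.mk (Ib3 k)) (Ideal.span {xx k, yy k, zz k}))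
      = Ideal.span {Ideal.Quotient.mk (Ib3 k) (xx k ^ 2 * zz k ^ 2), Ideal.Quotient.mk (Ib3 k) (xx k * yy k ^ 2), Ideal.Quotient.mk (Ib3 k) (yy k ^ 2 * zz k)} ∧
    Module.finrank k (Submodule.restrictScalars k
      ((⊥ : Ideal (MvPowerSeries (Fin 3) k ⧸ Ib3 k)).colon
        (Ideal.map (Ideal.Quotient.mk (Ib3 k)) (Ideal.span {xx k, yy k, zz k})))) = 3 := by
  set π := Ideal.Quotient.mkₐ k (Ib3 k) with hπ
  have hmk : ∀ f, Ideal.Quotient.mk (Ib3 k) f = π f := fun f => rfl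
  set S := (⊥ : Ideal (MvPowerSeries (Fin 3) k ⧸ Ib3 k)).colon
        (Ideal.map (Ideal.Quotient.mk (Ib3 k)) (Ideal.span {xx k, yy k, zz k})) with hS
  let v : Fin 3 → MvPowerSeries (Fin 3) k ⧸ Ib3 k :=
    ![π (mon k 2 0 2), π (mon k 1 2 0), π (mon k 0 2 1)]
  have hrange : Set.range v = {π (mon k 2 0 2), π (mon k 1 2 0), π (mon k 0 2 1)} := by
    ext t
    simp only [v, Set.mem_range, Fin.exists_fin_succ, Set.mem_insert_iff, Set.mem_singleton_iff]
    simp [eq_comm]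
  have hvS : ∀ t ∈ Set.range v, t ∈ S := by
    rw [hrange]
    rintro t (rfl | rfl | rfl) <;> rw [← hmk, hS, mk_mem_socle_iff] <;>
      simp only [mem_Ib3_iff] <;> refine ⟨?_, ?_, ?_⟩ <;>
      refine ⟨fun i hi l hl => ?_, ?_⟩ <;> (try interval_cases i <;> interval_cases l) <;>
      simp [cf_mul_mon, cf_mon]
  have hSv : ∀ t ∈ S, t ∈ Submodule.span k (Set.range v) := by
    intro t ht
    obtain ⟨f, rfl⟩ := Ideal.Quotient.mk_surjective t
    obtain ⟨hx, hy, hz⟩ := mk_mem_socle_iff.1 ht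
    rw [(Ideal.Quotient.mk_eq_mk_iff_sub_mem _ _).2 (socle_normal_form hx hy hz), hmk, map_add,
      map_add, map_smul, map_smul, map_smul, hrange]
    refine add_mem (add_mem ?_ ?_) ?_ <;>
      exact Submodule.smul_mem _ _ (Submodule.subset_span (by simp))
  have hspan : Submodule.restrictScalars k S = Submodule.span k (Set.range v) :=
    le_antisymm hSv (Submodule.span_le.2 hvS)
  have hind : LinearIndependent k v := by
    rw [Fintype.linearIndependent_iff]
    intro g hg
    have h0 : g 0 • mon k 2 0 2 + g 1 • mon k 1 2 0 + g 2 • mon k 0 2 1 ∈ Ib3 k := by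
      rw [← Ideal.Quotient.eq_zero_iff_mem, hmk, ← hg]
      simp [v, Fin.sum_univ_three]
    obtain ⟨n1, -, -, -, -, n6, n7⟩ := mem_Ib3_iff.1 h0
    have n1 := n1 2 le_rfl 2 le_rfl
    simp [cf_add, cf_smul, cf_mon] at n1 n6 n7
    intro i
    fin_cases i <;> assumption
  refine ⟨?_, ?_⟩
  · have hgen : ({Ideal.Quotient.mk (Ib3 k) (xx k ^ 2 * zz k ^ 2),
        Ideal.Quotient.mk (Ib3 k) (xx k * yy k ^ 2), Ideal.Quotient.mk (Ib3 k) (yy k ^ 2 * zz k)} :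
        Set (MvPowerSeries (Fin 3) k ⧸ Ib3 k)) = Set.range v := by
      rw [hrange]
      simp [mon, hmk]
    rw [hgen]
    refine le_antisymm (fun t ht => ?_) (Ideal.span_le.2 hvS)
    exact Submodule.span_le_restrictScalars k _ _ (hSv t ht)
  · rw [hspan, finrank_span_eq_card hind, Fintype.card_fin]
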